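/- Let u, v be smooth functions on S^2 with v compactly supported in an open set U ⊂ S^2, and let α be a smooth function on U. Then ∫_U [u(∇_A∇_B v - (1/2)(Δv)σ_{AB}) - v(∇_A∇_B u - (1/2)(Δu)σ_{AB})] ∇^A∇^B α = (1/2)∫_U (uΔv - vΔu)(Δ+2)α. -/

import Mathlib

open MeasureTheory Real
noncomputable section

/-- Points of the stereographic chart of the round unit sphere `S²`
(the chart covers `S²` minus the north pole). -/
abbrev Pt := Fin 2 → ℝ

/-- Partial derivative `∂_a f`. -/
def pd (a : Fin 2) (f : Pt → ℝ) (x : Pt) : ℝ := fderiv ℝ f x (Pi.single a 1)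

/-- The round (unit sphere) metric `σ_{AB}` in stereographic coordinates. -/
def rnd (x : Pt) (a b : Fin 2) : ℝ :=
  (4 / (1 + x 0 ^ 2 + x 1 ^ 2) ^ 2) * (if a = b then 1 else 0)

/-- The inverse round metric `σ^{AB}`. -/
def rndInv (x : Pt) (a b : Fin 2) : ℝ :=
  ((1 + x 0 ^ 2 + x 1 ^ 2) ^ 2 / 4) * (if a = b then 1 else 0)

/-- The area form `ε_{AB}` of the round metric. -/
def rndE (x : Pt) (a b : Fin 2) : ℝ :=
  (4 / (1 + x 0 ^ 2 + x 1 ^ 2) ^ 2) *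
    (if a = 0 ∧ b = 1 then 1 else if a = 1 ∧ b = 0 then -1 else 0)

/-- The area form with raised indices `ε^{AB}`. -/
def rndEUp (x : Pt) (a b : Fin 2) : ℝ :=
  ∑ c, ∑ d, rndInv x a c * rndInv x b d * rndE x c d

/-- Christoffel symbols `Γ^c_{ab}` of the round metric. -/
def Gam (c a b : Fin 2) (x : Pt) : ℝ :=
  (1/2) * ∑ d, rndInv x c d *
    (pd a (fun y => rnd y d b) x + pd b (fun y => rnd y d a) x - pd d (fun y => rnd y a b) x)

/-- Covariant derivative `∇_a Y^b` of a vector field. -/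
def cdVec (Y : Pt → Fin 2 → ℝ) (x : Pt) (a b : Fin 2) : ℝ :=
  pd a (fun y => Y y b) x + ∑ c, Gam b a c x * Y x c

/-- Covariant derivative `∇_a ω_b` of a covector field. -/
def cdCov (ω : Pt → Fin 2 → ℝ) (x : Pt) (a b : Fin 2) : ℝ :=
  pd a (fun y => ω y b) x - ∑ c, Gam c a b x * ω x c

/-- Covariant derivative `∇_a T_{bc}` of a (0,2)-tensor. -/
def cdT2 (T : Pt → Fin 2 → Fin 2 → ℝ) (x : Pt) (a b c : Fin 2) : ℝ :=
  pd a (fun y => T y b c) x - ∑ d, Gam d a b x * T x d c - ∑ d, Gam d a c x * T x b d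

/-- Covariant derivative `∇_a T_b{}^c` of a (1,1)-tensor (lower, upper). -/
def cdMix (T : Pt → Fin 2 → Fin 2 → ℝ) (x : Pt) (a b c : Fin 2) : ℝ :=
  pd a (fun y => T y b c) x - ∑ d, Gam d a b x * T x d c + ∑ d, Gam c a d x * T x b d

/-- Covariant Hessian `∇_a ∇_b f`. -/
def hess (f : Pt → ℝ) (x : Pt) (a b : Fin 2) : ℝ := cdCov (fun y c => pd c f y) x a b

/-- Laplace–Beltrami operator `Δf = σ^{ab} ∇_a∇_b f` of the round metric. -/
def lap (f : Pt → ℝ) (x : Pt) : ℝ := ∑ a, ∑ b, rndInv x a b * hess f x a b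

/-- Covariant divergence `∇_A Y^A` of a vector field. -/
def divg (Y : Pt → Fin 2 → ℝ) (x : Pt) : ℝ := ∑ a, cdVec Y x a a

/-- The area density `√(det σ)` of the round metric in stereographic coordinates. -/
def aDen (x : Pt) : ℝ := 4 / (1 + x 0 ^ 2 + x 1 ^ 2) ^ 2

/-- Smoothness of a vector field. -/
def SmoothVec (Y : Pt → Fin 2 → ℝ) : Prop := ∀ b, ContDiff ℝ (⊤ : ℕ∞) (fun x => Y x b)

/-- The conformal Killing equation `∇^A Y^B + ∇^B Y^A = (∇_C Y^C) σ^{AB}` on a set `U`. -/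
def ConformalKilling (Y : Pt → Fin 2 → ℝ) (U : Set Pt) : Prop :=
  ∀ x ∈ U, ∀ A B : Fin 2,
    (∑ c, rndInv x A c * cdVec Y x c B) + (∑ c, rndInv x B c * cdVec Y x c A)
      = divg Y x * rndInv x A B

/-- The curl `ε_{AB} ∇^A Y^B` of a vector field. -/
def curl (Y : Pt → Fin 2 → ℝ) (x : Pt) : ℝ :=
  ∑ a, ∑ b, ∑ c, rndE x a b * rndInv x a c * cdVec Y x c b

/-! ### Helper lemmas -/

lemma pd_congr {f g : Pt → ℝ} {x : Pt} (h : f =ᶠ[nhds x] g) (a : Fin 2) :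
    pd a f =ᶠ[nhds x] pd a g := by
  filter_upwards [h.fderiv (𝕜 := ℝ)] with y hy
  simp [pd, hy]

lemma hess_congr {f g : Pt → ℝ} {x : Pt} (h : f =ᶠ[nhds x] g) (a b : Fin 2) :
    hess f x a b = hess g x a b := by
  unfold hess cdCov
  have h1 := fun a => (pd_congr h a).eq_of_nhds
  have h2 := (pd_congr (pd_congr h b) a).eq_of_nhds
  simp only [h1]
  rw [show pd a (fun y => pd b f y) x = pd a (fun y => pd b g y) x from h2]

lemma lap_congr {f g : Pt → ℝ} {x : Pt} (h : f =ᶠ[nhds x] g) : lap f x = lap g x := by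
  simp only [lap, hess_congr h]

lemma hess_zero (x : Pt) (a b : Fin 2) : hess (fun _ => 0) x a b = 0 := by
  simp [hess, cdCov, pd]

lemma lap_zero (x : Pt) : lap (fun _ => 0) x = 0 := by
  simp [lap, hess_zero]

lemma pd_smooth {f : Pt → ℝ} (hf : ContDiff ℝ (⊤ : ℕ∞) f) (a : Fin 2) :
    ContDiff ℝ (⊤ : ℕ∞) (pd a f) := by
  unfold pd
  exact (hf.fderiv_right (m := (⊤ : ℕ∞)) (by simp)).clm_apply contDiff_const

lemma pd_add' {f g : Pt → ℝ} (hf : ContDiff ℝ (⊤ : ℕ∞) f) (hg : ContDiff ℝ (⊤ : ℕ∞) g)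
    (a : Fin 2) (x : Pt) : pd a (fun y => f y + g y) x = pd a f x + pd a g x := by
  unfold pd
  rw [fderiv_fun_add (hf.differentiable (by simp) x) (hg.differentiable (by simp) x)]
  simp

lemma pd_sub' {f g : Pt → ℝ} (hf : ContDiff ℝ (⊤ : ℕ∞) f) (hg : ContDiff ℝ (⊤ : ℕ∞) g)
    (a : Fin 2) (x : Pt) : pd a (fun y => f y - g y) x = pd a f x - pd a g x := by
  unfold pd
  rw [fderiv_fun_sub (hf.differentiable (by simp) x) (hg.differentiable (by simp) x)]
  simp

lemma pd_mul' {f g : Pt → ℝ} (hf : ContDiff ℝ (⊤ : ℕ∞) f) (hg : ContDiff ℝ (⊤ : ℕ∞) g)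
    (a : Fin 2) (x : Pt) :
    pd a (fun y => f y * g y) x = f x * pd a g x + g x * pd a f x := by
  unfold pd
  rw [fderiv_fun_mul (hf.differentiable (by simp) x) (hg.differentiable (by simp) x)]
  simp

lemma pd_const' (c : ℝ) (a : Fin 2) (x : Pt) : pd a (fun _ => c) x = 0 := by
  simp [pd]

lemma pd_coord (a b : Fin 2) (x : Pt) : pd a (fun y => y b) x = if a = b then 1 else 0 := by
  unfold pd
  rw [(hasFDerivAt_apply (𝕜 := ℝ) b x).fderiv]
  simp [Pi.single_apply, eq_comm]

lemma pd_comm {f : Pt → ℝ} (hf : ContDiff ℝ (⊤ : ℕ∞) f) (a b : Fin 2) (x : Pt) :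
    pd a (pd b f) x = pd b (pd a f) x := by
  have hs : IsSymmSndFDerivAt ℝ f x :=
    (hf.contDiffAt).isSymmSndFDerivAt (by
      rw [minSmoothness_of_isRCLikeNormedField]
      exact WithTop.coe_le_coe.2 (le_top : (2 : ℕ∞) ≤ ⊤))
  have key : ∀ c d : Fin 2, pd c (pd d f) x
      = fderiv ℝ (fderiv ℝ f) x (Pi.single c 1) (Pi.single d 1) := by
    intro c d
    have hd : DifferentiableAt ℝ (fderiv ℝ f) x :=
      (hf.fderiv_right (m := (⊤ : ℕ∞)) (by simp)).differentiable (by simp) x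
    unfold pd
    rw [fderiv_clm_apply hd (by fun_prop)]
    simp
  rw [key, key, hs]

lemma s_ne (x : Pt) : 1 + x 0 ^ 2 + x 1 ^ 2 ≠ 0 := by positivity

lemma pd_rnd (d a b : Fin 2) (x : Pt) :
    pd d (fun y => rnd y a b) x
      = (-16 * x d / (1 + x 0 ^ 2 + x 1 ^ 2) ^ 3) * (if a = b then 1 else 0) := by
  have h0 := hasFDerivAt_apply (𝕜 := ℝ) (0 : Fin 2) x
  have h1 := hasFDerivAt_apply (𝕜 := ℝ) (1 : Fin 2) x
  have hs : HasFDerivAt (fun y : Pt => 1 + y 0 ^ 2 + y 1 ^ 2) _ x :=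
    ((h0.pow 2).const_add 1).add (h1.pow 2)
  have hz := s_ne x
  unfold pd rnd
  generalize (if a = b then (1:ℝ) else 0) = c
  have hc : HasDerivAt (fun t : ℝ => 4 / t ^ 2 * c)
      (-8 / (1 + x 0 ^ 2 + x 1 ^ 2) ^ 3 * c)
      (1 + x 0 ^ 2 + x 1 ^ 2) := by
    have := ((hasDerivAt_const (1 + x 0 ^ 2 + x 1 ^ 2) (4:ℝ)).div
      ((hasDerivAt_id (1 + x 0 ^ 2 + x 1 ^ 2)).pow 2) (by simpa using hz)).mul_const c
    refine HasDerivAt.congr_deriv (f := fun t : ℝ => 4 / t ^ 2 * c) this ?_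
    simp only [id, Pi.pow_apply]
    field_simp
    norm_num
    ring
  have h := hc.comp_hasFDerivAt x hs
  have h' := h.fderiv
  simp only [Function.comp_def] at h'
  rw [h']
  fin_cases d <;> simp <;> ring

lemma hess00 (f : Pt → ℝ) (x : Pt) : hess f x 0 0 = pd 0 (pd 0 f) x
    + 2 / (1 + x 0 ^ 2 + x 1 ^ 2) * (x 0 * pd 0 f x - x 1 * pd 1 f x) := by
  have hz := s_ne x
  simp only [hess, cdCov, Gam, pd_rnd, Fin.sum_univ_two, rndInv]
  simp
  field_simp
  ring

lemma hess11 (f : Pt → ℝ) (x : Pt) : hess f x 1 1 = pd 1 (pd 1 f) x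
    - 2 / (1 + x 0 ^ 2 + x 1 ^ 2) * (x 0 * pd 0 f x - x 1 * pd 1 f x) := by
  have hz := s_ne x
  simp only [hess, cdCov, Gam, pd_rnd, Fin.sum_univ_two, rndInv]
  simp
  field_simp
  ring

lemma hess01 (f : Pt → ℝ) (x : Pt) : hess f x 0 1 = pd 0 (pd 1 f) x
    + 2 / (1 + x 0 ^ 2 + x 1 ^ 2) * (x 1 * pd 0 f x + x 0 * pd 1 f x) := by
  have hz := s_ne x
  simp only [hess, cdCov, Gam, pd_rnd, Fin.sum_univ_two, rndInv]
  simp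
  field_simp
  ring

lemma hess10 (f : Pt → ℝ) (x : Pt) : hess f x 1 0 = pd 1 (pd 0 f) x
    + 2 / (1 + x 0 ^ 2 + x 1 ^ 2) * (x 1 * pd 0 f x + x 0 * pd 1 f x) := by
  have hz := s_ne x
  simp only [hess, cdCov, Gam, pd_rnd, Fin.sum_univ_two, rndInv]
  simp
  field_simp
  ring

/-- The `0` component of the densitized flux. -/
def flux0 (u v α : Pt → ℝ) (y : Pt) : ℝ :=
  (u y * pd 1 v y - v y * pd 1 u y) *
    ((1 + y 0 * y 0 + y 1 * y 1) * ((1 + y 0 * y 0 + y 1 * y 1) * ((1/4) * pd 0 (pd 1 α) y)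
      + (1/2) * (y 1 * pd 0 α y + y 0 * pd 1 α y)))
  - (u y * pd 0 v y - v y * pd 0 u y) *
    ((1 + y 0 * y 0 + y 1 * y 1) * ((1 + y 0 * y 0 + y 1 * y 1) * ((1/4) * pd 1 (pd 1 α) y)
      - (1/2) * (y 0 * pd 0 α y - y 1 * pd 1 α y)) + α y)

/-- The `1` component of the densitized flux. -/
def flux1 (u v α : Pt → ℝ) (y : Pt) : ℝ :=
  (u y * pd 0 v y - v y * pd 0 u y) *
    ((1 + y 0 * y 0 + y 1 * y 1) * ((1 + y 0 * y 0 + y 1 * y 1) * ((1/4) * pd 0 (pd 1 α) y)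
      + (1/2) * (y 1 * pd 0 α y + y 0 * pd 1 α y)))
  - (u y * pd 1 v y - v y * pd 1 u y) *
    ((1 + y 0 * y 0 + y 1 * y 1) * ((1 + y 0 * y 0 + y 1 * y 1) * ((1/4) * pd 0 (pd 0 α) y)
      + (1/2) * (y 0 * pd 0 α y - y 1 * pd 1 α y)) + α y)

lemma flux0_smooth {u v α : Pt → ℝ} (hu : ContDiff ℝ (⊤ : ℕ∞) u) (hv : ContDiff ℝ (⊤ : ℕ∞) v)
    (hα : ContDiff ℝ (⊤ : ℕ∞) α) : ContDiff ℝ (⊤ : ℕ∞) (flux0 u v α) := by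
  have := pd_smooth hu
  have := pd_smooth hv
  have := pd_smooth hα
  have := fun a b => pd_smooth (pd_smooth hα a) b
  unfold flux0
  fun_prop

lemma flux1_smooth {u v α : Pt → ℝ} (hu : ContDiff ℝ (⊤ : ℕ∞) u) (hv : ContDiff ℝ (⊤ : ℕ∞) v)
    (hα : ContDiff ℝ (⊤ : ℕ∞) α) : ContDiff ℝ (⊤ : ℕ∞) (flux1 u v α) := by
  have := pd_smooth hu
  have := pd_smooth hv
  have := pd_smooth hα
  have := fun a b => pd_smooth (pd_smooth hα a) b
  unfold flux1
  fun_prop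

/-- The left integrand. -/
def lhsI (u v α : Pt → ℝ) (x : Pt) : ℝ :=
  (∑ A, ∑ B,
        (u x * (hess v x A B - (1/2) * lap v x * rnd x A B)
          - v x * (hess u x A B - (1/2) * lap u x * rnd x A B))
        * (∑ a, ∑ b, rndInv x A a * rndInv x B b * hess α x a b)) * aDen x

/-- The right integrand. -/
def rhsI (u v α : Pt → ℝ) (x : Pt) : ℝ :=
  (u x * lap v x - v x * lap u x) * (lap α x + 2 * α x) * aDen x

set_option maxHeartbeats 4000000 in
lemma div_flux {u v α : Pt → ℝ} (hu : ContDiff ℝ (⊤ : ℕ∞) u) (hv : ContDiff ℝ (⊤ : ℕ∞) v)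
    (hα : ContDiff ℝ (⊤ : ℕ∞) α) (x : Pt) :
    lhsI u v α x = (1/2) * rhsI u v α x + (pd 0 (flux0 u v α) x + pd 1 (flux1 u v α) x) := by
  have hu1 := pd_smooth hu
  have hv1 := pd_smooth hv
  have ha1 := pd_smooth hα
  have ha2 := fun a b => pd_smooth (pd_smooth hα a) b
  have cu := pd_comm hu 1 0 x
  have cv := pd_comm hv 1 0 x
  have ca := funext (pd_comm hα 1 0)
  have ca0 := pd_comm (ha1 0) 1 0 x
  have ca1 := pd_comm (ha1 1) 1 0 x
  unfold flux0 flux1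
  simp (disch := fun_prop) only [pd_add', pd_sub', pd_mul', pd_const', pd_coord]
  simp only [lhsI, rhsI, lap, aDen, Fin.sum_univ_two, rndInv, rnd, hess00, hess01, hess10, hess11]
  simp only [ca0, ca1, cu, cv, ca]
  have hz := s_ne x
  simp
  field_simp
  ring

lemma integral_pd_eq_zero {f : Pt → ℝ} (hf : ContDiff ℝ (⊤ : ℕ∞) f) (hc : HasCompactSupport f)
    (a : Fin 2) : Integrable (pd a f) ∧ ∫ x, pd a f x = 0 := by
  have hi : Integrable (pd a f) := by
    refine (pd_smooth hf a).continuous.integrable_of_hasCompactSupport ?_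
    exact hc.fderiv_apply ℝ _
  have hf0 : Integrable f := hf.continuous.integrable_of_hasCompactSupport hc
  refine ⟨hi, ?_⟩
  have := integral_mul_fderiv_eq_neg_fderiv_mul_of_integrable (𝕜 := ℝ) (μ := (volume : Measure Pt))
    (f := fun _ : Pt => (1:ℝ)) (g := f) (v := Pi.single a 1)
    (by simp) (by simp only [one_mul]; exact hi) (by simpa using hf0)
    (by fun_prop) (fun x _ => hf.differentiable (by simp) x)
  simpa [pd] using this

lemma flux_zero {u v α : Pt → ℝ} {x : Pt} (hx : x ∉ tsupport v) :
    flux0 u v α x = 0 ∧ flux1 u v α x = 0 := by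
  have h : v =ᶠ[nhds x] fun _ => 0 := notMem_tsupport_iff_eventuallyEq.1 hx
  have h0 := h.eq_of_nhds
  have h1 := fun a => (pd_congr h a).eq_of_nhds
  simp only [flux0, flux1, h0, h1, pd_const']
  simp

lemma global_id {u v α : Pt → ℝ} (hu : ContDiff ℝ (⊤ : ℕ∞) u) (hv : ContDiff ℝ (⊤ : ℕ∞) v)
    (hα : ContDiff ℝ (⊤ : ℕ∞) α) (hc : HasCompactSupport v) :
    ∫ x, lhsI u v α x = (1/2) * ∫ x, rhsI u v α x := by
  have hc0 : HasCompactSupport (flux0 u v α) :=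
    HasCompactSupport.intro hc fun x hx => (flux_zero hx).1
  have hc1 : HasCompactSupport (flux1 u v α) :=
    HasCompactSupport.intro hc fun x hx => (flux_zero hx).2
  obtain ⟨i0, z0⟩ := integral_pd_eq_zero (flux0_smooth hu hv hα) hc0 0
  obtain ⟨i1, z1⟩ := integral_pd_eq_zero (flux1_smooth hu hv hα) hc1 1
  have hd : Integrable (fun x => pd 0 (flux0 u v α) x + pd 1 (flux1 u v α) x) := i0.add i1
  have hdz : ∫ x, (pd 0 (flux0 u v α) x + pd 1 (flux1 u v α) x) = 0 := by
    rw [integral_add i0 i1, z0, z1, add_zero]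
  have he := div_flux hu hv hα
  by_cases hg : Integrable (rhsI u v α)
  · simp_rw [he]
    rw [integral_add (hg.const_mul _) hd, hdz, integral_const_mul, add_zero]
  · have hf : ¬ Integrable (lhsI u v α) := by
      intro hf
      apply hg
      have := (hf.sub hd).const_mul 2
      refine this.congr (Filter.Eventually.of_forall fun x => ?_)
      simp only [Pi.sub_apply, he x]
      ring
    rw [integral_undef hg, integral_undef hf, mul_zero]

lemma integrand_zero {u v α : Pt → ℝ} {x : Pt} (hx : x ∉ tsupport v) :
    lhsI u v α x = 0 ∧ rhsI u v α x = 0 := by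
  have h : v =ᶠ[nhds x] fun _ => 0 := notMem_tsupport_iff_eventuallyEq.1 hx
  have h0 := h.eq_of_nhds
  simp only [lhsI, rhsI, h0, hess_congr h, lap_congr h, hess_zero, lap_zero]
  simp

lemma integrand_congr {u v α β : Pt → ℝ} {x : Pt} (h : α =ᶠ[nhds x] β) :
    lhsI u v α x = lhsI u v β x ∧ rhsI u v α x = rhsI u v β x := by
  simp only [lhsI, rhsI, h.eq_of_nhds, hess_congr h, lap_congr h]
  simp

lemma exists_extension {U K : Set Pt} (hU : IsOpen U) (hK : IsCompact K) (hKU : K ⊆ U)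
    {α : Pt → ℝ} (hα : ContDiffOn ℝ (⊤ : ℕ∞) α U) :
    ∃ β : Pt → ℝ, ContDiff ℝ (⊤ : ℕ∞) β ∧ ∀ x ∈ K, α =ᶠ[nhds x] β := by
  obtain ⟨t, ht, hKt, htU⟩ := exists_compact_between hK hU hKU
  obtain ⟨χ, h1, h0, -⟩ := exists_contMDiffMap_one_nhds_of_subset_interior
    (n := (⊤ : ℕ∞)) (modelWithCornersSelf ℝ Pt) hK.isClosed hKt
  have hχ : ContDiff ℝ (⊤ : ℕ∞) (fun x => χ x) := χ.contMDiff.contDiff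
  refine ⟨fun x => χ x * α x, ?_, ?_⟩
  · rw [contDiff_iff_contDiffAt]
    intro x
    by_cases hx : x ∈ U
    · exact hχ.contDiffAt.mul (hα.contDiffAt (hU.mem_nhds hx))
    · have : (fun x => χ x * α x) =ᶠ[nhds x] fun _ => 0 := by
        filter_upwards [ht.isClosed.isOpen_compl.mem_nhds (fun h => hx (htU h))] with y hy
        simp [h0 y hy]
      exact contDiffAt_const.congr_of_eventuallyEq this
  · intro x hx
    filter_upwards [Filter.Eventually.filter_mono (nhds_le_nhdsSet hx) h1] with y hy
    simp [hy]

/-- for `u, v` smooth on `S²` with `v` compactly supported in an open set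
`U ⊆ S²` and `α` smooth on `U`,
`∫_U [u(∇_A∇_B v - ½(Δv)σ_{AB}) - v(∇_A∇_B u - ½(Δu)σ_{AB})] ∇^A∇^B α
  = ½ ∫_U (uΔv - vΔu)(Δ+2)α`. -/
theorem symmetric_traceless_hessian_pairing
    (U : Set Pt) (hU : IsOpen U)
    (u v : Pt → ℝ) (hu : ContDiff ℝ (⊤ : ℕ∞) u) (hv : ContDiff ℝ (⊤ : ℕ∞) v)
    (hvsupp : HasCompactSupport v) (hvU : tsupport v ⊆ U)
    (α : Pt → ℝ) (hα : ContDiffOn ℝ (⊤ : ℕ∞) α U) :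
    (∫ x in U,
      (∑ A, ∑ B,
        (u x * (hess v x A B - (1/2) * lap v x * rnd x A B)
          - v x * (hess u x A B - (1/2) * lap u x * rnd x A B))
        * (∑ a, ∑ b, rndInv x A a * rndInv x B b * hess α x a b)) * aDen x)
    = (1/2) * ∫ x in U, (u x * lap v x - v x * lap u x) * (lap α x + 2 * α x) * aDen x := by
  change ∫ x in U, lhsI u v α x = (1/2) * ∫ x in U, rhsI u v α x
  have hz : ∀ x, x ∉ U → x ∉ tsupport v := fun x hx h => hx (hvU h)
  rw [setIntegral_eq_integral_of_forall_compl_eq_zero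
      (fun x hx => (integrand_zero (hz x hx)).1),
    setIntegral_eq_integral_of_forall_compl_eq_zero
      (fun x hx => (integrand_zero (hz x hx)).2)]
  obtain ⟨β, hβ, hαβ⟩ := exists_extension hU hvsupp hvU hα
  have key : ∀ x, lhsI u v α x = lhsI u v β x ∧ rhsI u v α x = rhsI u v β x := by
    intro x
    by_cases hx : x ∈ tsupport v
    · exact integrand_congr (hαβ x hx)
    · simp [integrand_zero hx]
  simp_rw [fun x => (key x).1, fun x => (key x).2]
  exact global_id hu hv hβ hvsupp
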